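/- arXiv:1409.6413 — 2 statements merged into one kernel-verified Lean document; each statement's English description precedes it below -/
import Mathlib

section
/- The function f₁(x) = ln Γ(x+1) − (1/2)ln(2π) − (2/3)(x+1/2)ln(x+1/2) − (1/6)(x+1/2)ln x − (1/6)(x+1/2)ln(x+1) + (x+1/2) is completely monotonic on (0,∞), i.e., (−1)^n f₁^(n)(x) ≥ 0 for all x > 0 and all n ≥ 0. -/
open Real

/-!
Write `f` for the function of the theorem. A Laplace transform `∫₀^∞ exp (-x t) dμ(t)` of a positive
measure is completely monotonic, so it is enough to exhibit `f` as one. The functional equation of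
`Γ` makes `g x = f x - f (x + 1)` elementary, and `g'' x = ∫₀^∞ exp (-x t) w(t) dt` with an explicit
`w`, nonnegative because `sinh u * (cosh u + 2) ≤ u * (sinh u ^ 2 + 3)` for `u ≥ 0`. Integrating
twice from infinity divides the density by `t ^ 2`. Since `f (x + n) → 0` by Stirling's formula,
`f x = ∑ g (x + n)`, and the geometric series gives
`f x = ∫₀^∞ exp (-x t) w(t) / (t ^ 2 * (1 - exp (-t))) dt`.
-/

open Filter Topology Set MeasureTheory ProbabilityTheory

lemma lintegral_exp_neg_mul_Ioi {t : ℝ} (ht : 0 < t) (x : ℝ) :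
    ∫⁻ y in Ioi x, ENNReal.ofReal (exp (-(y * t))) =
      ENNReal.ofReal t⁻¹ * ENNReal.ofReal (exp (-(x * t))) := by
  have hcomm : ∀ y, -(y * t) = -t * y := fun y ↦ by ring
  simp only [hcomm]
  rw [← ofReal_integral_eq_lintegral_ofReal (exp_neg_integrableOn_Ioi x ht)
    (ae_of_all _ fun y ↦ (exp_pos _).le), integral_exp_mul_Ioi (neg_lt_zero.2 ht),
    ← ENNReal.ofReal_mul (inv_nonneg.2 ht.le), neg_div_neg_eq, div_eq_inv_mul]

lemma integrableOn_pow_mul_exp_neg_mul_Ioi (n : ℕ) {b : ℝ} (hb : 0 < b) :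
    IntegrableOn (fun t : ℝ ↦ t ^ n * exp (-(b * t))) (Ioi 0) := by
  have hn : (-1 : ℝ) < n := neg_one_lt_zero.trans_le n.cast_nonneg
  simpa using integrableOn_rpow_mul_exp_neg_mul_rpow hn one_pos hb

lemma integral_pow_mul_exp_neg_mul_Ioi (n : ℕ) {b : ℝ} (hb : 0 < b) :
    ∫ t in Ioi (0 : ℝ), t ^ n * exp (-(b * t)) = n.factorial / b ^ (n + 1) := by
  have h := integral_rpow_mul_exp_neg_mul_Ioi (a := n + 1) (by positivity) hb
  rw [Gamma_nat_eq_factorial, ← Nat.cast_succ, rpow_natCast, Nat.cast_succ] at h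
  simp only [add_sub_cancel_right, rpow_natCast] at h
  rw [h, one_div, inv_pow, inv_mul_eq_div]

section AffineMulExp

variable (p q : ℝ) {b : ℝ}

lemma integrableOn_affine_mul_exp_neg_mul_Ioi (hb : 0 < b) :
    IntegrableOn (fun t ↦ (p + q * t) * exp (-(b * t))) (Ioi 0) := by
  have h0 := (integrableOn_pow_mul_exp_neg_mul_Ioi 0 hb).const_mul p
  have h1 := (integrableOn_pow_mul_exp_neg_mul_Ioi 1 hb).const_mul q
  exact (h0.add h1).congr (ae_of_all _ fun t ↦ by simp only [Pi.add_apply]; ring)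

lemma integral_affine_mul_exp_neg_mul_Ioi (hb : 0 < b) :
    ∫ t in Ioi 0, (p + q * t) * exp (-(b * t)) = p / b + q / b ^ 2 := by
  have h0 := (integrableOn_pow_mul_exp_neg_mul_Ioi 0 hb).const_mul p
  have h1 := (integrableOn_pow_mul_exp_neg_mul_Ioi 1 hb).const_mul q
  calc ∫ t in Ioi 0, (p + q * t) * exp (-(b * t))
      = ∫ t in Ioi 0, (p * (t ^ 0 * exp (-(b * t))) + q * (t ^ 1 * exp (-(b * t)))) := by
        congr with t; ring
    _ = p / b + q / b ^ 2 := by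
        rw [integral_add h0 h1, integral_const_mul, integral_const_mul,
          integral_pow_mul_exp_neg_mul_Ioi 0 hb, integral_pow_mul_exp_neg_mul_Ioi 1 hb]
        simp [div_eq_mul_inv]

end AffineMulExp

/-- `F` agrees on `(0, ∞)` with the Laplace transform of the restriction of `μ` to `(0, ∞)`.
Stated with the lower Lebesgue integral, so that convergence is part of the condition; `0 ≤ F x` is
then needed because `ENNReal.ofReal` truncates negative values to `0`. -/
def IsLaplaceTransform (F : ℝ → ℝ) (μ : Measure ℝ) : Prop :=
  ∀ x, 0 < x → 0 ≤ F x ∧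
    ∫⁻ t in Ioi 0, ENNReal.ofReal (exp (-(x * t))) ∂μ = ENNReal.ofReal (F x)

namespace IsLaplaceTransform

variable {F G : ℝ → ℝ} {μ : Measure ℝ} {x : ℝ}

lemma integrableOn (h : IsLaplaceTransform F μ) (hx : 0 < x) :
    IntegrableOn (fun t ↦ exp (-(x * t))) (Ioi 0) μ := by
  refine ⟨by fun_prop, ?_⟩
  rw [hasFiniteIntegral_iff_ofReal (ae_of_all _ fun t ↦ (exp_pos _).le), (h x hx).2]
  exact ENNReal.ofReal_lt_top

lemma mgf_neg_eq (h : IsLaplaceTransform F μ) (hx : 0 < x) :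
    mgf (fun t ↦ -t) (μ.restrict (Ioi 0)) x = F x := by
  simp only [mgf, mul_neg]
  rw [integral_eq_lintegral_of_nonneg_ae (ae_of_all _ fun t ↦ (exp_pos _).le) (by fun_prop),
    (h x hx).2, ENNReal.toReal_ofReal (h x hx).1]

lemma iteratedDeriv_eq (h : IsLaplaceTransform F μ) (n : ℕ) (hx : 0 < x) :
    iteratedDeriv n F x = ∫ t in Ioi 0, (-t) ^ n * exp (-(x * t)) ∂μ := by
  have hF : EqOn F (mgf (fun t ↦ -t) (μ.restrict (Ioi 0))) (Ioi 0) :=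
    fun y hy ↦ (h.mgf_neg_eq hy).symm
  have hint : Ioi 0 ⊆ interior (integrableExpSet (fun t ↦ -t) (μ.restrict (Ioi 0))) := by
    refine interior_maximal (fun y hy ↦ ?_) isOpen_Ioi
    simpa only [integrableExpSet, mem_ofPred_eq, mul_neg] using! h.integrableOn hy
  rw [hF.iteratedDeriv_of_isOpen isOpen_Ioi n hx, iteratedDeriv_mgf (hint hx)]
  simp only [mul_neg]

lemma neg_one_pow_mul_iteratedDeriv_nonneg (h : IsLaplaceTransform F μ) (n : ℕ) (hx : 0 < x) :
    0 ≤ (-1) ^ n * iteratedDeriv n F x := by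
  rw [h.iteratedDeriv_eq n hx, ← integral_const_mul]
  refine setIntegral_nonneg measurableSet_Ioi fun t (ht : 0 < t) ↦ ?_
  rw [← mul_assoc, ← mul_pow, neg_one_mul, neg_neg]
  positivity

lemma withDensity {w : ℝ → ℝ} (hw : Measurable w) (hw0 : ∀ t, 0 < t → 0 ≤ w t)
    (hint : ∀ x, 0 < x → IntegrableOn (fun t ↦ w t * exp (-(x * t))) (Ioi 0) μ)
    (hF : ∀ x, 0 < x → ∫ t in Ioi 0, w t * exp (-(x * t)) ∂μ = F x) :
    IsLaplaceTransform F (μ.withDensity fun t ↦ ENNReal.ofReal (w t)) := by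
  intro x hx
  have hnonneg : ∀ t ∈ Ioi (0 : ℝ), 0 ≤ w t * exp (-(x * t)) :=
    fun t ht ↦ mul_nonneg (hw0 t ht) (exp_pos _).le
  refine ⟨(setIntegral_nonneg measurableSet_Ioi hnonneg).trans_eq (hF x hx), ?_⟩
  rw [setLIntegral_withDensity_eq_setLIntegral_mul _ (by fun_prop) (by fun_prop) measurableSet_Ioi,
    ← hF x hx,
    ofReal_integral_eq_lintegral_ofReal (hint x hx)
      (ae_restrict_of_forall_mem measurableSet_Ioi hnonneg)]
  refine setLIntegral_congr_fun measurableSet_Ioi fun t ht ↦ ?_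
  exact (ENNReal.ofReal_mul (hw0 t ht)).symm

lemma of_hasDerivAt_neg [SFinite μ] (hG : IsLaplaceTransform G μ)
    (hderiv : ∀ x, 0 < x → HasDerivAt F (-G x) x) (hlim : Tendsto F atTop (𝓝 0)) :
    IsLaplaceTransform F (μ.withDensity fun t ↦ ENNReal.ofReal t⁻¹) := by
  intro x hx
  have hpos : ∀ {y}, y ∈ Ici x → 0 < y := fun hy ↦ hx.trans_le hy
  have hderiv' : ∀ y ∈ Ici x, HasDerivAt F (-G y) y := fun y hy ↦ hderiv y (hpos hy)
  have hGnonneg : ∀ y ∈ Ioi x, 0 ≤ G y := fun y hy ↦ (hG y (hx.trans hy)).1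
  have hGnonpos : ∀ y ∈ Ioi x, -G y ≤ 0 := fun y hy ↦ neg_nonpos.2 (hGnonneg y hy)
  have hGint : IntegrableOn G (Ioi x) := by
    simpa using (integrableOn_Ioi_deriv_of_nonpos' hderiv' hGnonpos hlim).neg
  have hFx : F x = ∫ y in Ioi x, G y := by
    have := integral_Ioi_of_hasDerivAt_of_nonpos' hderiv' hGnonpos hlim
    rw [integral_neg] at this
    linarith
  refine ⟨hFx ▸ setIntegral_nonneg measurableSet_Ioi hGnonneg, ?_⟩
  calc ∫⁻ t in Ioi 0, ENNReal.ofReal (exp (-(x * t))) ∂(μ.withDensity fun t ↦ ENNReal.ofReal t⁻¹)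
      = ∫⁻ t in Ioi 0, ENNReal.ofReal t⁻¹ * ENNReal.ofReal (exp (-(x * t))) ∂μ :=
        setLIntegral_withDensity_eq_setLIntegral_mul _ (by fun_prop) (by fun_prop) measurableSet_Ioi
    _ = ∫⁻ t in Ioi 0, (∫⁻ y in Ioi x, ENNReal.ofReal (exp (-(y * t)))) ∂μ :=
        setLIntegral_congr_fun measurableSet_Ioi fun t ht ↦ (lintegral_exp_neg_mul_Ioi ht x).symm
    _ = ∫⁻ y in Ioi x, (∫⁻ t in Ioi 0, ENNReal.ofReal (exp (-(y * t))) ∂μ) :=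
        lintegral_lintegral_swap (by fun_prop)
    _ = ∫⁻ y in Ioi x, ENNReal.ofReal (G y) :=
        setLIntegral_congr_fun measurableSet_Ioi fun y hy ↦ (hG y (hx.trans hy)).2
    _ = ENNReal.ofReal (F x) := by
        rw [hFx, ofReal_integral_eq_lintegral_ofReal hGint
          (ae_restrict_of_forall_mem measurableSet_Ioi hGnonneg)]

lemma of_sub_comp_add {c : ℝ} (hG : IsLaplaceTransform G μ) (hc : 0 ≤ c)
    (hsub : ∀ x, 0 < x → F x - F (x + c) = G x)
    (hlim : ∀ x, 0 < x → Tendsto (fun n : ℕ ↦ F (x + n * c)) atTop (𝓝 0)) :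
    IsLaplaceTransform F (μ.withDensity fun t ↦ (1 - ENNReal.ofReal (exp (-(c * t))))⁻¹) := by
  intro x hx
  have hpos : ∀ n : ℕ, 0 < x + n * c := fun n ↦ by positivity
  have hGnonneg : ∀ n : ℕ, 0 ≤ G (x + n * c) := fun n ↦ (hG _ (hpos n)).1
  have hsum : HasSum (fun n : ℕ ↦ G (x + n * c)) (F x) := by
    rw [hasSum_iff_tendsto_nat_of_nonneg hGnonneg]
    have htele : ∀ n : ℕ, ∑ k ∈ Finset.range n, G (x + k * c) = F x - F (x + n * c) := fun n ↦ by
      simpa [← hsub _ (hpos _), add_mul, add_assoc] using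
        Finset.sum_range_sub' (fun k : ℕ ↦ F (x + k * c)) n
    simpa [htele] using (hlim x hx).const_sub (F x)
  refine ⟨hsum.nonneg hGnonneg, ?_⟩
  have hgeom : ∀ t, ∑' n : ℕ, ENNReal.ofReal (exp (-((x + n * c) * t))) =
      (1 - ENNReal.ofReal (exp (-(c * t))))⁻¹ * ENNReal.ofReal (exp (-(x * t))) := fun t ↦ by
    rw [← ENNReal.tsum_geometric, ← ENNReal.tsum_mul_right]
    refine tsum_congr fun n ↦ ?_
    rw [← ENNReal.ofReal_pow (exp_pos _).le, ← ENNReal.ofReal_mul (by positivity), ← exp_nat_mul,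
      ← exp_add]
    ring_nf
  calc ∫⁻ t in Ioi 0, ENNReal.ofReal (exp (-(x * t)))
        ∂(μ.withDensity fun t ↦ (1 - ENNReal.ofReal (exp (-(c * t))))⁻¹)
      = ∫⁻ t in Ioi 0,
          (1 - ENNReal.ofReal (exp (-(c * t))))⁻¹ * ENNReal.ofReal (exp (-(x * t))) ∂μ :=
        setLIntegral_withDensity_eq_setLIntegral_mul _ (by fun_prop) (by fun_prop) measurableSet_Ioi
    _ = ∑' n : ℕ, ∫⁻ t in Ioi 0, ENNReal.ofReal (exp (-((x + n * c) * t))) ∂μ := by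
        simp only [← hgeom]
        exact lintegral_tsum fun n ↦ by fun_prop
    _ = ∑' n : ℕ, ENNReal.ofReal (G (x + n * c)) := tsum_congr fun n ↦ (hG _ (hpos n)).2
    _ = ENNReal.ofReal (F x) := by
        rw [← ENNReal.ofReal_tsum_of_nonneg hGnonneg hsum.summable, hsum.tsum_eq]

end IsLaplaceTransform

lemma le_of_hasDerivAt_nonneg {f f' : ℝ → ℝ} {a b : ℝ}
    (hf : ∀ x, a ≤ x → HasDerivAt f (f' x) x) (hf' : ∀ x, a < x → 0 ≤ f' x) (hab : a ≤ b) :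
    f a ≤ f b := by
  have hmono : MonotoneOn f (Ici a) := by
    refine monotoneOn_of_hasDerivWithinAt_nonneg (f' := f') (convex_Ici a)
      (fun x hx ↦ (hf x hx).continuousAt.continuousWithinAt) ?_ ?_ <;>
    simp only [interior_Ici, mem_Ioi]
    exacts [fun x hx ↦ (hf x hx.le).hasDerivWithinAt, hf']
  exact hmono self_mem_Ici hab hab

lemma sinh_le_mul_cosh {u : ℝ} (hu : 0 ≤ u) : sinh u ≤ u * cosh u := by
  have hderiv (x : ℝ) : HasDerivAt (fun x ↦ x * cosh x - sinh x) (x * sinh x) x :=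
    (((hasDerivAt_id' x).mul (hasDerivAt_cosh x)).sub (hasDerivAt_sinh x)).congr_deriv (by ring)
  have hderiv_nonneg (x : ℝ) (hx : 0 < x) : 0 ≤ x * sinh x :=
    mul_nonneg hx.le (sinh_nonneg_iff.2 hx.le)
  simpa using le_of_hasDerivAt_nonneg (fun x _ ↦ hderiv x) hderiv_nonneg hu

lemma sinh_mul_cosh_add_two_le {u : ℝ} (hu : 0 ≤ u) :
    sinh u * (cosh u + 2) ≤ u * (sinh u ^ 2 + 3) := by
  have hderiv (x : ℝ) : HasDerivAt (fun x ↦ x * (sinh x ^ 2 + 3) - sinh x * (cosh x + 2))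
      (2 * sinh x * (x * cosh x - sinh x) + (cosh x - 1) ^ 2) x := by
    refine (((hasDerivAt_id' x).mul (((hasDerivAt_sinh x).pow 2).add_const 3)).sub
      ((hasDerivAt_sinh x).mul ((hasDerivAt_cosh x).add_const 2))).congr_deriv ?_
    norm_num
    linear_combination -2 * cosh_sq x
  have hderiv_nonneg (x : ℝ) (hx : 0 < x) :
      0 ≤ 2 * sinh x * (x * cosh x - sinh x) + (cosh x - 1) ^ 2 := by
    have hsinh : 0 ≤ 2 * sinh x := mul_nonneg two_pos.le (sinh_nonneg_iff.2 hx.le)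
    have hcosh : 0 ≤ x * cosh x - sinh x := sub_nonneg.2 (sinh_le_mul_cosh hx.le)
    exact add_nonneg (mul_nonneg hsinh hcosh) (sq_nonneg _)
  simpa using le_of_hasDerivAt_nonneg (fun x _ ↦ hderiv x) hderiv_nonneg hu

lemma tendsto_add_mul_log_add_sub_log_atTop (c : ℝ) :
    Tendsto (fun x ↦ (x + c) * (log (x + c) - log x)) atTop (𝓝 c) := by
  have h := (tendsto_mul_log_one_add_div_atTop c).add
    ((tendsto_log_comp_add_sub_log c).const_mul c)
  rw [mul_zero, add_zero] at h
  refine h.congr' ?_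
  filter_upwards [eventually_gt_atTop 0, eventually_gt_atTop (-c)] with x hx hxc
  rw [one_add_div hx.ne', log_div (by linarith) hx.ne']
  ring

lemma tendsto_log_Gamma_add_nat_sub_log_factorial {x : ℝ} (hx : 0 < x) :
    Tendsto (fun n : ℕ ↦ log (Gamma (x + n + 1)) - (x * log n + log n.factorial)) atTop (𝓝 0) := by
  have hfeq {y : ℝ} (hy : 0 < y) : (log ∘ Gamma) (y + 1) = (log ∘ Gamma) y + log y := by
    simp only [Function.comp_apply]
    rw [Gamma_add_one hy.ne', log_mul hy.ne' (Gamma_pos_of_pos hy).ne', add_comm]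
  have h := (BohrMollerup.tendsto_log_gamma hx).const_sub (log (Gamma x))
  rw [sub_self] at h
  refine h.congr fun n ↦ ?_
  have hshift := BohrMollerup.f_add_nat_eq hfeq hx (n + 1)
  simp only [Function.comp_apply, Nat.cast_succ, ← add_assoc] at hshift
  rw [BohrMollerup.logGammaSeq, hshift]
  ring

lemma tendsto_log_factorial_sub_stirling :
    Tendsto (fun n : ℕ ↦ log n.factorial - ((n + 1 / 2) * log n - n)) atTop
      (𝓝 (1 / 2 * log (2 * π))) := by
  have h := (Stirling.tendsto_stirlingSeq_sqrt_pi.log (by positivity)).add_const (1 / 2 * log 2)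
  rw [log_sqrt pi_pos.le] at h
  have hlim : log π / 2 + 1 / 2 * log 2 = 1 / 2 * log (2 * π) := by
    rw [log_mul two_ne_zero pi_ne_zero]; ring
  rw [hlim] at h
  refine h.congr' ?_
  filter_upwards [eventually_gt_atTop 0] with n hn
  have hn' : (n : ℝ) ≠ 0 := by positivity
  rw [Stirling.log_stirlingSeq_formula, log_mul two_ne_zero hn', log_div hn' (exp_ne_zero _),
    log_exp]
  ring

lemma tendsto_log_Gamma_add_nat_sub_stirling {x : ℝ} (hx : 0 < x) :
    Tendsto (fun n : ℕ ↦ log (Gamma (x + n + 1)) - ((x + n + 1 / 2) * log n - n)) atTop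
      (𝓝 (1 / 2 * log (2 * π))) := by
  have h := (tendsto_log_Gamma_add_nat_sub_log_factorial hx).add tendsto_log_factorial_sub_stirling
  rw [zero_add] at h
  exact h.congr fun n ↦ by ring

lemma hasDerivAt_log_add_const {x c : ℝ} (h : x + c ≠ 0) :
    HasDerivAt (fun x ↦ log (x + c)) (1 / (x + c)) x :=
  ((hasDerivAt_id' x).add_const c).log h

lemma hasDerivAt_add_mul_log_add {x c : ℝ} (h : x + c ≠ 0) (d : ℝ) :
    HasDerivAt (fun x ↦ (x + d) * log (x + c)) (log (x + c) + (x + d) / (x + c)) x :=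
  (((hasDerivAt_id' x).add_const d).mul (hasDerivAt_log_add_const h)).congr_deriv (by ring)

/-- The function of the theorem: the error of an approximation to `log (Γ (x + 1))`. -/
noncomputable def logGammaRemainder (x : ℝ) : ℝ :=
  log (Gamma (x + 1)) - (1 / 2) * log (2 * π)
    - (2 / 3) * (x + 1 / 2) * log (x + 1 / 2)
    - (1 / 6) * (x + 1 / 2) * log x
    - (1 / 6) * (x + 1 / 2) * log (x + 1) + (x + 1 / 2)

namespace logGammaRemainder

/-- The decrement `f x - f (x + 1)` of `f = logGammaRemainder`, for `0 < x`. -/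
noncomputable def step (x : ℝ) : ℝ :=
  2 / 3 * ((x + 3 / 2) * log (x + 3 / 2) - (x + 1 / 2) * log (x + 1 / 2)) - 5 / 6 * log (x + 1)
    + 1 / 6 * ((x + 3 / 2) * log (x + 2) - (x + 1 / 2) * log x) - 1

/-- The negated derivative of `step`, the sign being that of a Laplace transform. -/
noncomputable def stepNegDeriv (x : ℝ) : ℝ :=
  5 / 6 / (x + 1) + 1 / 12 / x + 1 / 12 / (x + 2)
    - 2 / 3 * (log (x + 3 / 2) - log (x + 1 / 2)) - 1 / 6 * (log (x + 2) - log x)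

/-- The second derivative of `step`. -/
noncomputable def stepDeriv2 (x : ℝ) : ℝ :=
  5 / 6 / (x + 1) ^ 2 + 1 / 12 / x ^ 2 + 1 / 12 / (x + 2) ^ 2
    + 2 / 3 * (1 / (x + 3 / 2) - 1 / (x + 1 / 2)) + 1 / 6 * (1 / (x + 2) - 1 / x)

/-- The density on `(0, ∞)` whose Laplace transform is `stepDeriv2`, in a form showing its sign. -/
noncomputable def density (t : ℝ) : ℝ :=
  2 / 3 * exp (-t) *
    (t / 2 * (sinh (t / 2) ^ 2 + 3) - sinh (t / 2) * (cosh (t / 2) + 2))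

lemma tendsto_add_nat {x : ℝ} (hx : 0 < x) :
    Tendsto (fun n : ℕ ↦ logGammaRemainder (x + n)) atTop (𝓝 0) := by
  have hmul_log (c : ℝ) :=
    (tendsto_add_mul_log_add_sub_log_atTop c).comp tendsto_natCast_atTop_atTop
  have hlog (c : ℝ) := (tendsto_log_comp_add_sub_log c).comp tendsto_natCast_atTop_atTop
  have hGamma := (tendsto_log_Gamma_add_nat_sub_stirling hx).sub_const (1 / 2 * log (2 * π))
  have hhalf := (hmul_log (x + 1 / 2)).const_mul (2 / 3)
  have hzero := ((hmul_log x).add ((hlog x).const_mul (1 / 2))).const_mul (1 / 6)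
  have hone := ((hmul_log (x + 1)).sub ((hlog (x + 1)).const_mul (1 / 2))).const_mul (1 / 6)
  convert (((hGamma.sub hhalf).sub hzero).sub hone).add_const (x + 1 / 2) using 2 with n
  · simp only [logGammaRemainder, Function.comp_apply]
    rw [show (n : ℝ) + (x + 1 / 2) = x + n + 1 / 2 by ring,
      show (n : ℝ) + (x + 1) = x + n + 1 by ring, add_comm (n : ℝ) x]
    ring
  · ring

lemma sub_comp_add_one {x : ℝ} (hx : 0 < x) :
    logGammaRemainder x - logGammaRemainder (x + 1) = step x := by
  have hx1 : 0 < x + 1 := by positivity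
  simp only [logGammaRemainder, step]
  rw [Gamma_add_one hx1.ne', log_mul hx1.ne' (Gamma_pos_of_pos hx1).ne',
    show x + 1 + 1 / 2 = x + 3 / 2 by ring, show x + 1 + 1 = x + 2 by ring]
  ring

lemma hasDerivAt_step {x : ℝ} (hx : 0 < x) : HasDerivAt step (-stepNegDeriv x) x := by
  have hthree := hasDerivAt_add_mul_log_add (c := 3 / 2) (x := x) (by positivity) (3 / 2)
  have hhalf := hasDerivAt_add_mul_log_add (c := 1 / 2) (x := x) (by positivity) (1 / 2)
  have hone := hasDerivAt_log_add_const (c := 1) (x := x) (by positivity)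
  have htwo := hasDerivAt_add_mul_log_add (c := 2) (x := x) (by positivity) (3 / 2)
  have hzero := hasDerivAt_add_mul_log_add (c := 0) (x := x) (by positivity) (1 / 2)
  simp only [add_zero] at hzero
  refine (((((hthree.sub hhalf).const_mul (2 / 3)).sub (hone.const_mul (5 / 6))).add
    ((htwo.sub hzero).const_mul (1 / 6))).sub_const 1).congr_deriv ?_
  rw [stepNegDeriv]
  field_simp
  ring

lemma hasDerivAt_stepNegDeriv {x : ℝ} (hx : 0 < x) :
    HasDerivAt stepNegDeriv (-stepDeriv2 x) x := by
  have hinv {c : ℝ} (h : x + c ≠ 0) := ((hasDerivAt_id' x).add_const c).inv h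
  have hlog {c : ℝ} (h : x + c ≠ 0) := hasDerivAt_log_add_const h
  have hrational := (((hinv (c := 1) (by positivity)).const_mul (5 / 6)).add
    ((hasDerivAt_inv hx.ne').const_mul (1 / 12))).add
    ((hinv (c := 2) (by positivity)).const_mul (1 / 12))
  have hhalves := ((hlog (c := 3 / 2) (by positivity)).sub
    (hlog (c := 1 / 2) (by positivity))).const_mul (2 / 3)
  have hends := ((hlog (c := 2) (by positivity)).sub (hasDerivAt_log hx.ne')).const_mul (1 / 6)
  refine ((hrational.sub hhalves).sub hends).congr_deriv ?_
  rw [stepDeriv2]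
  ring

lemma tendsto_step : Tendsto step atTop (𝓝 0) := by
  have hmul_log := tendsto_add_mul_log_add_sub_log_atTop
  have hlog := tendsto_log_comp_add_sub_log
  have hhalves := ((hmul_log (3 / 2)).sub (hmul_log (1 / 2))).const_mul (2 / 3)
  have hone := (hlog 1).const_mul (5 / 6)
  have htwo := ((hmul_log 2).sub ((hlog 2).const_mul (1 / 2))).const_mul (1 / 6)
  convert ((hhalves.sub hone).add htwo).sub_const 1 using 2 with x
  · rw [step]
    ring
  · norm_num

lemma tendsto_stepNegDeriv : Tendsto stepNegDeriv atTop (𝓝 0) := by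
  have hinv (a c : ℝ) : Tendsto (fun x ↦ a / (x + c)) atTop (𝓝 0) :=
    (tendsto_atTop_add_const_right _ c tendsto_id).const_div_atTop a
  have hlog := tendsto_log_comp_add_sub_log
  have hrational := ((hinv (5 / 6) 1).add (hinv (1 / 12) 0)).add (hinv (1 / 12) 2)
  have hhalves := ((hlog (3 / 2)).sub (hlog (1 / 2))).const_mul (2 / 3)
  convert (hrational.sub hhalves).sub ((hlog 2).const_mul (1 / 6)) using 2 with x
  · rw [stepNegDeriv, add_zero]
    ring
  · norm_num

lemma measurable_density : Measurable density := by
  unfold density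
  fun_prop

lemma density_nonneg {t : ℝ} (ht : 0 ≤ t) : 0 ≤ density t :=
  mul_nonneg (by positivity) (sub_nonneg.2 (sinh_mul_cosh_add_two_le (by positivity)))

lemma density_mul_exp_neg_mul (x t : ℝ) :
    density t * exp (-(x * t)) =
      ∑ i : Fin 5, (![-1 / 6, -2 / 3, 0, 2 / 3, 1 / 6] i + ![1 / 12, 0, 5 / 6, 0, 1 / 12] i * t) *
        exp (-((x + i / 2) * t)) := by
  have hshift (k : ℕ) : exp (-((x + k / 2) * t)) = exp (-(x * t)) * exp (-(t / 2)) ^ k := by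
    rw [← exp_nat_mul, ← exp_add]
    ring_nf
  have hsq : exp (-t) = exp (-(t / 2)) ^ 2 := by
    rw [← exp_nat_mul]
    ring_nf
  have hinv : exp (t / 2) = (exp (-(t / 2)))⁻¹ := by rw [exp_neg, inv_inv]
  simp only [hshift, Fin.sum_univ_five, Matrix.cons_val, Fin.coe_ofNat_eq_mod, Nat.reduceMod]
  rw [density, sinh_eq, cosh_eq, hsq, hinv]
  field_simp
  ring

lemma integrableOn_density_mul_exp_neg_mul {x : ℝ} (hx : 0 < x) :
    IntegrableOn (fun t ↦ density t * exp (-(x * t))) (Ioi 0) := by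
  simp only [density_mul_exp_neg_mul]
  exact integrable_finsetSum _ fun i _ ↦
    integrableOn_affine_mul_exp_neg_mul_Ioi _ _ (by positivity)

lemma integral_density_mul_exp_neg_mul {x : ℝ} (hx : 0 < x) :
    ∫ t in Ioi 0, density t * exp (-(x * t)) = stepDeriv2 x := by
  have hpos (i : Fin 5) : 0 < x + i / 2 := by positivity
  simp only [density_mul_exp_neg_mul]
  rw [integral_finsetSum _ fun i _ ↦ integrableOn_affine_mul_exp_neg_mul_Ioi _ _ (hpos i)]
  simp only [integral_affine_mul_exp_neg_mul_Ioi _ _ (hpos _), Fin.sum_univ_five,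
    Matrix.cons_val, stepDeriv2]
  norm_num
  ring

lemma exists_isLaplaceTransform : ∃ μ, IsLaplaceTransform logGammaRemainder μ := by
  have hstepDeriv2 : IsLaplaceTransform stepDeriv2 (volume.withDensity _) :=
    .withDensity measurable_density (fun t ht ↦ density_nonneg ht.le)
      (fun x hx ↦ integrableOn_density_mul_exp_neg_mul hx)
      (fun x hx ↦ integral_density_mul_exp_neg_mul hx)
  have hstepNegDeriv := hstepDeriv2.of_hasDerivAt_neg (fun x hx ↦ hasDerivAt_stepNegDeriv hx)
    tendsto_stepNegDeriv
  have hstep := hstepNegDeriv.of_hasDerivAt_neg (fun x hx ↦ hasDerivAt_step hx) tendsto_step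
  exact ⟨_, hstep.of_sub_comp_add zero_le_one (fun x hx ↦ sub_comp_add_one hx)
    fun x hx ↦ by simpa using tendsto_add_nat hx⟩

end logGammaRemainder

theorem f1_completely_monotone :
    ∀ n : ℕ, ∀ x : ℝ, 0 < x →
      0 ≤ (-1 : ℝ) ^ n * iteratedDeriv n
        (fun x : ℝ => Real.log (Real.Gamma (x + 1)) - (1 / 2) * Real.log (2 * π)
          - (2 / 3) * (x + 1 / 2) * Real.log (x + 1 / 2)
          - (1 / 6) * (x + 1 / 2) * Real.log x
          - (1 / 6) * (x + 1 / 2) * Real.log (x + 1) + (x + 1 / 2)) x := by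
  intro n x hx
  obtain ⟨μ, hμ⟩ := logGammaRemainder.exists_isLaplaceTransform
  exact hμ.neg_one_pow_mul_iteratedDeriv_nonneg n hx
end

section
/- The function f₂(x) = ln Γ(x+1) − (1/2)ln(2π) − (x+1/2)·((x+1)ln(x+1) − x·ln x − 1) + x + 1/2 is completely monotonic on (0,∞). -/
open Real

/-!
Write `I x = (x + 1) log (x + 1) - x log x - 1`, the mean of `log` over `[x, x + 1]`, so that the
function is `f x = log Γ(x + 1) - log (2π) / 2 - (x + 1/2) I x + x + 1/2`. The functional equation
of `Γ` removes `Γ` from the difference `f x - f (x + 1)`, and the Taylor series of the logarithm in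
`(x + 1)⁻¹` turn it into `∑ n / (2 (n + 1) (n + 2) (2 n + 3)) (x + 1) ^ (-(2 n + 2))`, which is
completely monotone term by term. As `f (x + N) → 0` by Stirling's formula, `f x` is the sum over
`k` of these differences at `x + k`.

Complete monotonicity passes to pointwise sums because completely monotone functions are convex,
and for convex functions pointwise convergence forces convergence of the derivatives.
-/

open Filter Set
open scoped ContDiff Nat Topology

theorem tendsto_deriv_of_convexOn {ι : Type*} {l : Filter ι} {F : ι → ℝ → ℝ} {f : ℝ → ℝ}
    {s : Set ℝ} {x : ℝ} (hs : s ∈ 𝓝 x) (hconv : ∀ᶠ i in l, ConvexOn ℝ s (F i))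
    (hdiff : ∀ᶠ i in l, DifferentiableAt ℝ (F i) x)
    (hlim : ∀ y ∈ s, Tendsto (F · y) l (𝓝 (f y))) (hf : DifferentiableAt ℝ f x) :
    Tendsto (fun i => deriv (F i) x) l (𝓝 (deriv f x)) := by
  have hxs : x ∈ s := mem_of_mem_nhds hs
  have hslope {y : ℝ} (hy : y ∈ s) : Tendsto (fun i => slope (F i) x y) l (𝓝 (slope f x y)) := by
    simpa only [slope_def_field] using ((hlim y hy).sub (hlim x hxs)).div_const (y - x)
  have hderiv : Tendsto (slope f x) (𝓝[≠] x) (𝓝 (deriv f x)) := hf.hasDerivAt.tendsto_slope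
  refine tendsto_order.2 ⟨fun a ha => ?_, fun a ha => ?_⟩
  · obtain ⟨y, ⟨hay, hys⟩, hyx⟩ :=
      ((((hderiv.mono_left (nhdsLT_le_nhdsNE x)).eventually_const_lt ha).and
        (mem_nhdsWithin_of_mem_nhds hs)).and self_mem_nhdsWithin).exists
    filter_upwards [hconv, hdiff, (hslope hys).eventually_const_lt hay] with i hci hdi hi
    rw [slope_comm] at hi
    exact hi.trans_le (hci.slope_le_deriv hys hxs hyx hdi)
  · obtain ⟨y, ⟨hya, hys⟩, hxy⟩ :=
      ((((hderiv.mono_left (nhdsGT_le_nhdsNE x)).eventually_lt_const ha).and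
        (mem_nhdsWithin_of_mem_nhds hs)).and self_mem_nhdsWithin).exists
    filter_upwards [hconv, hdiff, (hslope hys).eventually_lt_const hya] with i hci hdi hi
    exact (hci.deriv_le_slope hxs hys hxy hdi).trans_lt hi

/-- Complete monotonicity of `f` on `s`: `f` is smooth and its derivatives alternate in sign,
starting with `0 ≤ f`. Derivatives are taken in `ℝ` and not within `s`, so `f` is smooth in a
neighbourhood of every point of `s`; the notion is meant for open `s`. -/
structure CompletelyMonotoneOn (f : ℝ → ℝ) (s : Set ℝ) : Prop where
  contDiffAt : ∀ x ∈ s, ContDiffAt ℝ ∞ f x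
  iteratedDeriv_nonneg : ∀ (n : ℕ), ∀ x ∈ s, 0 ≤ (-1) ^ n * iteratedDeriv n f x

namespace CompletelyMonotoneOn

variable {ι : Type*} {f : ℝ → ℝ} {F : ι → ℝ → ℝ} {s t : Set ℝ}

theorem mono (hf : CompletelyMonotoneOn f s) (hts : t ⊆ s) : CompletelyMonotoneOn f t :=
  ⟨fun x hx => hf.contDiffAt x (hts hx), fun n x hx => hf.iteratedDeriv_nonneg n x (hts hx)⟩

theorem differentiableAt (hf : CompletelyMonotoneOn f s) {x : ℝ} (hx : x ∈ s) :
    DifferentiableAt ℝ f x :=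
  (hf.contDiffAt x hx).differentiableAt (by simp)

theorem sum {I : Finset ι} (hF : ∀ i ∈ I, CompletelyMonotoneOn (F i) s) :
    CompletelyMonotoneOn (fun x => ∑ i ∈ I, F i x) s where
  contDiffAt x hx := ContDiffAt.sum fun i hi => (hF i hi).contDiffAt x hx
  iteratedDeriv_nonneg n x hx := by
    rw [iteratedDeriv_fun_sum fun i hi => ((hF i hi).contDiffAt x hx).of_le (mod_cast le_top),
      Finset.mul_sum]
    exact Finset.sum_nonneg fun i hi => (hF i hi).iteratedDeriv_nonneg n x hx

theorem const_mul (hf : CompletelyMonotoneOn f s) {c : ℝ} (hc : 0 ≤ c) :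
    CompletelyMonotoneOn (fun x => c * f x) s where
  contDiffAt x hx := contDiffAt_const.mul (hf.contDiffAt x hx)
  iteratedDeriv_nonneg n x hx := by
    rw [iteratedDeriv_const_mul_field, mul_left_comm]
    exact mul_nonneg hc (hf.iteratedDeriv_nonneg n x hx)

theorem comp_add_const (hf : CompletelyMonotoneOn f s) {c : ℝ} (hc : MapsTo (· + c) t s) :
    CompletelyMonotoneOn (fun x => f (x + c)) t where
  contDiffAt x hx := (hf.contDiffAt (x + c) (hc hx)).comp x (contDiffAt_id.add contDiffAt_const)
  iteratedDeriv_nonneg n x hx := by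
    rw [iteratedDeriv_comp_add_const]
    exact hf.iteratedDeriv_nonneg n (x + c) (hc hx)

theorem neg_deriv (hf : CompletelyMonotoneOn f s) :
    CompletelyMonotoneOn (fun x => -deriv f x) s where
  contDiffAt x hx := ((hf.contDiffAt x hx).derivWithin (by simp)).neg
  iteratedDeriv_nonneg n x hx := by
    have h := hf.iteratedDeriv_nonneg (n + 1) x hx
    rw [iteratedDeriv_succ', pow_succ] at h
    rw [iteratedDeriv_fun_neg]
    linarith

theorem convexOn (hf : CompletelyMonotoneOn f s) (hs : Convex ℝ s) : ConvexOn ℝ s f := by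
  refine convexOn_of_deriv2_nonneg' hs (fun x hx => (hf.differentiableAt hx).differentiableWithinAt)
    (fun x hx => ?_) fun x hx => ?_
  · simpa using (hf.neg_deriv.differentiableAt hx).neg.differentiableWithinAt
  · simpa [iteratedDeriv_eq_iterate] using hf.iteratedDeriv_nonneg 2 x hx

theorem tendsto_deriv {l : Filter ι} (hs : IsOpen s)
    (hF : ∀ᶠ i in l, CompletelyMonotoneOn (F i) s)
    (hlim : ∀ x ∈ s, Tendsto (F · x) l (𝓝 (f x))) {x : ℝ} (hx : x ∈ s)
    (hf : DifferentiableAt ℝ f x) : Tendsto (fun i => deriv (F i) x) l (𝓝 (deriv f x)) := by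
  obtain ⟨r, hr, hball⟩ := Metric.isOpen_iff.1 hs x hx
  exact tendsto_deriv_of_convexOn (Metric.ball_mem_nhds x hr)
    (hF.mono fun i hi => (hi.mono hball).convexOn (convex_ball x r))
    (hF.mono fun i hi => hi.differentiableAt hx) (fun y hy => hlim y (hball hy)) hf

theorem of_tendsto {l : Filter ι} [l.NeBot] (hs : IsOpen s)
    (hF : ∀ᶠ i in l, CompletelyMonotoneOn (F i) s) (hf : ∀ x ∈ s, ContDiffAt ℝ ∞ f x)
    (hlim : ∀ x ∈ s, Tendsto (F · x) l (𝓝 (f x))) : CompletelyMonotoneOn f s := by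
  refine ⟨hf, fun n => ?_⟩
  induction n generalizing F f with
  | zero =>
    refine fun x hx => ge_of_tendsto (by simpa using hlim x hx) (hF.mono fun i hi => ?_)
    simpa using hi.iteratedDeriv_nonneg 0 x hx
  | succ n ih =>
    intro x hx
    have hneg : 0 ≤ (-1) ^ n * iteratedDeriv n (fun y => -deriv f y) x :=
      ih (hF.mono fun i hi => hi.neg_deriv) (fun y hy => ((hf y hy).derivWithin (by simp)).neg)
        (fun y hy => (tendsto_deriv hs hF hlim hy ((hf y hy).differentiableAt (by simp))).neg) x hx
    rw [iteratedDeriv_fun_neg] at hneg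
    rw [iteratedDeriv_succ', pow_succ]
    linarith

theorem of_hasSum (hs : IsOpen s) (hF : ∀ i, CompletelyMonotoneOn (F i) s)
    (hf : ∀ x ∈ s, ContDiffAt ℝ ∞ f x) (hsum : ∀ x ∈ s, HasSum (F · x) (f x)) :
    CompletelyMonotoneOn f s :=
  of_tendsto hs (.of_forall fun _ => sum fun i _ => hF i) hf hsum

theorem of_sub_comp_add_const {a c : ℝ} (hc : 0 ≤ c) (hf : ∀ x ∈ Ioi a, ContDiffAt ℝ ∞ f x)
    (hsub : CompletelyMonotoneOn (fun x => f x - f (x + c)) (Ioi a))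
    (hlim : ∀ x ∈ Ioi a, Tendsto (fun n : ℕ => f (x + n * c)) atTop (𝓝 0)) :
    CompletelyMonotoneOn f (Ioi a) := by
  have hshift (k : ℕ) : MapsTo (· + k * c) (Ioi a) (Ioi a) := fun x (hx : a < x) =>
    lt_add_of_lt_of_nonneg hx (by positivity)
  refine of_tendsto (l := atTop) isOpen_Ioi (.of_forall fun n : ℕ =>
    sum (I := Finset.range n) fun k _ => hsub.comp_add_const (hshift k)) hf fun x hx => ?_
  have htelescope (n : ℕ) :
      ∑ k ∈ Finset.range n, (f (x + k * c) - f (x + k * c + c)) = f x - f (x + n * c) := by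
    simpa [add_mul, add_assoc] using Finset.sum_range_sub' (fun k : ℕ => f (x + k * c)) n
  simpa only [htelescope, sub_zero] using (hlim x hx).const_sub (f x)

end CompletelyMonotoneOn

theorem completelyMonotoneOn_rpow {r : ℝ} (hr : r ≤ 0) :
    CompletelyMonotoneOn (fun x => x ^ r) (Ioi 0) where
  contDiffAt x hx := contDiffAt_rpow_const_of_ne hx.ne'
  iteratedDeriv_nonneg n x (hx : 0 < x) := by
    rw [iteratedDeriv_eq_iterate, iter_deriv_rpow_const, ← mul_assoc,
      ← ascPochhammer_eval_neg_eq_descPochhammer]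
    refine mul_nonneg ?_ (rpow_nonneg hx.le _)
    rcases hr.eq_or_lt with rfl | hr
    · rw [neg_zero, ascPochhammer_eval_zero]
      positivity
    · exact (ascPochhammer_pos n (-r) (neg_pos.2 hr)).le

theorem analyticAt_complexGamma {z : ℂ} (hz : ∀ m : ℕ, z ≠ -m) : AnalyticAt ℂ Complex.Gamma z := by
  simpa only [Pi.inv_def, inv_inv] using
    (Complex.differentiable_one_div_Gamma.analyticAt z).inv (inv_ne_zero (Complex.Gamma_ne_zero hz))

theorem contDiffAt_realGamma {n : WithTop ℕ∞} {x : ℝ} (hx : ∀ m : ℕ, x ≠ -m) :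
    ContDiffAt ℝ n Gamma x :=
  (analyticAt_complexGamma (z := x) fun m => mod_cast hx m).contDiffAt.real_of_complex

theorem log_Gamma_add_one {x : ℝ} (hx : 0 < x) : log (Gamma (x + 1)) = log (Gamma x) + log x := by
  rw [Gamma_add_one hx.ne', log_mul hx.ne' (Gamma_pos_of_pos hx).ne', add_comm]

theorem tendsto_log_Gamma_add_natCast_add_one_sub {x : ℝ} (hx : 0 < x) :
    Tendsto (fun n : ℕ => log (Gamma (x + n + 1)) - (x * log n + log n !)) atTop (𝓝 0) := by
  have hlim := (BohrMollerup.tendsto_log_gamma hx).const_sub (log (Gamma x))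
  rw [sub_self] at hlim
  refine hlim.congr fun n => ?_
  have hprod := BohrMollerup.f_add_nat_eq (f := fun y => log (Gamma y)) log_Gamma_add_one hx (n + 1)
  rw [Nat.cast_add_one, ← add_assoc] at hprod
  rw [hprod, BohrMollerup.logGammaSeq]
  ring

theorem tendsto_log_factorial_sub :
    Tendsto (fun n : ℕ => log n ! - ((n + 1 / 2) * log n - n)) atTop (𝓝 (log (2 * π) / 2)) := by
  have hlim := (Stirling.tendsto_stirlingSeq_sqrt_pi.log (by positivity)).add_const (log 2 / 2)
  rw [log_sqrt pi_pos.le] at hlim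
  rw [log_mul two_ne_zero pi_ne_zero, add_div, add_comm]
  refine hlim.congr' ?_
  filter_upwards [eventually_ne_atTop 0] with n hn
  have hn : (n : ℝ) ≠ 0 := mod_cast hn
  rw [Stirling.log_stirlingSeq_formula, log_mul two_ne_zero hn, log_div hn (exp_ne_zero 1), log_exp]
  ring

theorem tendsto_add_mul_log_add_sub_log (c x : ℝ) :
    Tendsto (fun y => (y + c) * (log (y + x) - log y)) atTop (𝓝 x) := by
  have hlog : Tendsto (fun y => log (1 + x / y)) atTop (𝓝 0) := by
    simpa using ((tendsto_const_nhds.div_atTop tendsto_id).const_add 1).log (by simp)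
  have hlim := (tendsto_mul_log_one_add_div_atTop x).add (hlog.const_mul c)
  rw [mul_zero, add_zero] at hlim
  refine hlim.congr' ?_
  filter_upwards [eventually_gt_atTop 0, eventually_gt_atTop (-x)] with y hy hxy
  rw [one_add_div hy.ne', log_div (by linarith) hy.ne']
  ring

theorem tendsto_log_Gamma_add_natCast_add_one_sub_stirling {x : ℝ} (hx : 0 < x) :
    Tendsto (fun n : ℕ => log (Gamma (x + n + 1)) - ((x + n + 1 / 2) * log (x + n) - (x + n)))
      atTop (𝓝 (log (2 * π) / 2)) := by
  have hlim := ((tendsto_log_Gamma_add_natCast_add_one_sub hx).add tendsto_log_factorial_sub).sub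
    (((tendsto_add_mul_log_add_sub_log (x + 1 / 2) x).comp tendsto_natCast_atTop_atTop).sub_const x)
  rw [zero_add, sub_self, sub_zero] at hlim
  refine hlim.congr fun n => ?_
  rw [Function.comp_apply, add_comm (n : ℝ) x]
  ring

theorem log_le_half_sub_inv {a : ℝ} (ha : 1 ≤ a) : log a ≤ (a - a⁻¹) / 2 := by
  rw [← sinh_log (by linarith), self_le_sinh_iff]
  exact log_nonneg ha

/-- The mean of `log` over `[x, x + 1]`, that is `∫ t in x..x + 1, log t`, in closed form. -/
noncomputable def meanLog (x : ℝ) : ℝ := (x + 1) * log (x + 1) - x * log x - 1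

theorem meanLog_sub_log {x : ℝ} (hx : 0 < x) :
    meanLog x - log x = (x + 1) * log (1 + 1 / x) - 1 := by
  rw [one_add_div hx.ne', log_div (by linarith) hx.ne', meanLog]
  ring

theorem half_le_add_half_mul_meanLog_sub_log {x : ℝ} (hx : 0 < x) :
    1 / 2 ≤ (x + 1 / 2) * (meanLog x - log x) := by
  rw [meanLog_sub_log hx]
  calc 1 / 2 = (x + 1 / 2) * ((x + 1) * (2 * (1 / x) / (1 / x + 2)) - 1) := by field_simp; ring
    _ ≤ (x + 1 / 2) * ((x + 1) * log (1 + 1 / x) - 1) := by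
      gcongr
      exact le_log_one_add_of_nonneg (by positivity)

theorem add_half_mul_meanLog_sub_log_le {x : ℝ} (hx : 0 < x) :
    (x + 1 / 2) * (meanLog x - log x) ≤ 1 / 2 + x⁻¹ / 4 := by
  rw [meanLog_sub_log hx]
  calc (x + 1 / 2) * ((x + 1) * log (1 + 1 / x) - 1)
      ≤ (x + 1 / 2) * ((x + 1) * ((1 + 1 / x - (1 + 1 / x)⁻¹) / 2) - 1) := by
        gcongr
        exact log_le_half_sub_inv (le_add_of_nonneg_right (by positivity))
    _ = 1 / 2 + x⁻¹ / 4 := by field_simp; ring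

theorem tendsto_add_half_mul_meanLog_sub_log :
    Tendsto (fun x => (x + 1 / 2) * (meanLog x - log x)) atTop (𝓝 (1 / 2)) := by
  have hupper : Tendsto (fun x : ℝ => 1 / 2 + x⁻¹ / 4) atTop (𝓝 (1 / 2)) := by
    simpa only [zero_div, add_zero] using
      (tendsto_inv_atTop_zero.div_const (4 : ℝ)).const_add (1 / 2 : ℝ)
  refine tendsto_of_tendsto_of_tendsto_of_le_of_le' tendsto_const_nhds hupper ?_ ?_
  · filter_upwards [eventually_gt_atTop 0] with x hx
    exact half_le_add_half_mul_meanLog_sub_log hx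
  · filter_upwards [eventually_gt_atTop 0] with x hx
    exact add_half_mul_meanLog_sub_log_le hx

/-- The error of the variant `log (2π) / 2 + (x + 1/2) meanLog x - (x + 1/2)` of Stirling's
approximation to `log Γ(x + 1)`; the function `f₂` of the theorem. -/
noncomputable def meanLogStirlingError (x : ℝ) : ℝ :=
  log (Gamma (x + 1)) - (1 / 2) * log (2 * π) - (x + 1 / 2) * meanLog x + x + 1 / 2

theorem contDiffAt_meanLogStirlingError {n : WithTop ℕ∞} {x : ℝ} (hx : 0 < x) :
    ContDiffAt ℝ n meanLogStirlingError x := by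
  have hpos : 0 < x + 1 := by linarith
  have hGamma : ContDiffAt ℝ n Gamma (x + 1) := contDiffAt_realGamma fun m => by
    linarith [m.cast_nonneg (α := ℝ)]
  have hGamma_ne : Gamma (x + 1) ≠ 0 := (Gamma_pos_of_pos hpos).ne'
  unfold meanLogStirlingError meanLog
  fun_prop (disch := first | assumption | positivity)

theorem tendsto_meanLogStirlingError_add_natCast {x : ℝ} (hx : 0 < x) :
    Tendsto (fun n : ℕ => meanLogStirlingError (x + n)) atTop (𝓝 0) := by
  have hmeanLog := tendsto_add_half_mul_meanLog_sub_log.comp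
    (tendsto_atTop_add_const_left _ x tendsto_natCast_atTop_atTop)
  have hlim := ((tendsto_log_Gamma_add_natCast_add_one_sub_stirling hx).sub hmeanLog).add_const
    (1 / 2 - log (2 * π) / 2)
  rw [show log (2 * π) / 2 - 1 / 2 + (1 / 2 - log (2 * π) / 2) = 0 by ring] at hlim
  refine hlim.congr fun n => ?_
  rw [Function.comp_apply, meanLogStirlingError]
  ring

theorem meanLogStirlingError_sub_add_one {x : ℝ} (hx : 0 < x) :
    meanLogStirlingError x - meanLogStirlingError (x + 1) =
      3 / 2 * (x + 1) * (log (1 + (x + 1)⁻¹) - log (1 - (x + 1)⁻¹)) +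
        ((x + 1) ^ 2 + 1 / 2) * log (1 - (x + 1)⁻¹ ^ 2) - 2 := by
  have hpos : 0 < x + 1 := by linarith
  have hadd : 1 + (x + 1)⁻¹ = (x + 1 + 1) / (x + 1) := by field_simp
  have hsub : 1 - (x + 1)⁻¹ = x / (x + 1) := by field_simp; ring
  have hlog_add : log (1 + (x + 1)⁻¹) = log (x + 1 + 1) - log (x + 1) := by
    rw [hadd, log_div (by positivity) hpos.ne']
  have hlog_sub : log (1 - (x + 1)⁻¹) = log x - log (x + 1) := by
    rw [hsub, log_div hx.ne' hpos.ne']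
  have hlog_sq : log (1 - (x + 1)⁻¹ ^ 2) = log (1 + (x + 1)⁻¹) + log (1 - (x + 1)⁻¹) := by
    rw [← log_mul (by positivity) (by rw [hsub]; positivity)]
    ring_nf
  rw [hlog_sq, hlog_add, hlog_sub, meanLogStirlingError, meanLogStirlingError, meanLog, meanLog,
    log_Gamma_add_one hpos]
  ring

theorem hasSum_pow_log_sub_log_add_log {u : ℝ} (hu : u ≠ 0) (hu1 : |u| < 1) :
    HasSum (fun n : ℕ => (n : ℝ) / (2 * (n + 1) * (n + 2) * (2 * n + 3)) * u ^ (2 * n + 2))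
      (3 / 2 * u⁻¹ * (log (1 + u) - log (1 - u)) + (u⁻¹ ^ 2 + 1 / 2) * log (1 - u ^ 2) - 2) := by
  have hsq : HasSum (fun n : ℕ => (u ^ 2) ^ (n + 1) / (n + 1)) (-log (1 - u ^ 2)) :=
    hasSum_pow_div_log_of_abs_lt_one (by
      rw [abs_pow]
      exact pow_lt_one₀ (abs_nonneg u) hu1 two_ne_zero)
  -- The first terms, `u ^ 2` and `2 * u`, are split off: rescaled, they give the constant `-2`.
  have hsq_tail := ((hasSum_nat_add_iff' 1).2 hsq).mul_left (u⁻¹ ^ 2)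
  have hodd_tail := ((hasSum_nat_add_iff' 1).2
    (hasSum_log_sub_log_of_abs_lt_one hu1)).mul_left (3 / 2 * u⁻¹)
  convert! (hodd_tail.sub hsq_tail).sub (hsq.mul_left (1 / 2)) using 1
  · funext n
    push_cast
    field_simp
    ring
  · simp only [Finset.sum_range_one]
    field_simp
    ring

theorem hasSum_meanLogStirlingError_sub_add_one {x : ℝ} (hx : 0 < x) :
    HasSum (fun n : ℕ =>
        (n : ℝ) / (2 * (n + 1) * (n + 2) * (2 * n + 3)) * (x + 1) ^ (-(2 * n + 2) : ℝ))
      (meanLogStirlingError x - meanLogStirlingError (x + 1)) := by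
  have hpos : 0 < x + 1 := by linarith
  have hlt : |(x + 1)⁻¹| < 1 := by
    rw [abs_of_pos (by positivity)]
    exact inv_lt_one_of_one_lt₀ (by linarith)
  have hrpow (n : ℕ) : (x + 1) ^ (-(2 * n + 2) : ℝ) = (x + 1)⁻¹ ^ (2 * n + 2) := by
    rw [rpow_neg hpos.le, inv_pow, ← rpow_natCast]
    push_cast
    rfl
  simp only [hrpow, meanLogStirlingError_sub_add_one hx]
  simpa only [inv_inv] using hasSum_pow_log_sub_log_add_log (inv_ne_zero hpos.ne') hlt

theorem completelyMonotoneOn_meanLogStirlingError_sub_add_one :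
    CompletelyMonotoneOn (fun x => meanLogStirlingError x - meanLogStirlingError (x + 1))
      (Ioi 0) := by
  have hshift : MapsTo (· + 1) (Ioi (0 : ℝ)) (Ioi 0) := fun _ hx =>
    mem_Ioi.2 (add_pos hx one_pos)
  refine .of_hasSum isOpen_Ioi (fun n => ?_) (fun x (hx : 0 < x) => ?_)
    fun x hx => hasSum_meanLogStirlingError_sub_add_one hx
  · exact ((completelyMonotoneOn_rpow (by linarith [n.cast_nonneg (α := ℝ)])).comp_add_const
      hshift).const_mul (by positivity)
  · exact (contDiffAt_meanLogStirlingError hx).sub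
      ((contDiffAt_meanLogStirlingError (by linarith)).comp x (contDiffAt_id.add contDiffAt_const))

theorem completelyMonotoneOn_meanLogStirlingError :
    CompletelyMonotoneOn meanLogStirlingError (Ioi 0) :=
  .of_sub_comp_add_const zero_le_one (fun _ hx => contDiffAt_meanLogStirlingError hx)
    completelyMonotoneOn_meanLogStirlingError_sub_add_one fun _ hx => by
      simpa using tendsto_meanLogStirlingError_add_natCast hx

theorem f2_completely_monotone :
    ∀ n : ℕ, ∀ x : ℝ, 0 < x →
      0 ≤ (-1 : ℝ) ^ n * iteratedDeriv n
        (fun x : ℝ => Real.log (Real.Gamma (x + 1)) - (1 / 2) * Real.log (2 * π)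
          - (x + 1 / 2) * ((x + 1) * Real.log (x + 1) - x * Real.log x - 1)
          + x + 1 / 2) x :=
  completelyMonotoneOn_meanLogStirlingError.iteratedDeriv_nonneg
end
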